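/- arXiv:2007.12653 — 6 statements merged into one kernel-verified Lean document; each statement's English description precedes it below -/
import Mathlib

section
/- Let m ≥ 1 be an integer and let λ be a real number with λ > m. For every integer n with n ≥ λ, the binomial upper tail with mean λ is nonincreasing in the number of trials: P(X_{n+1} ≥ m) ≤ P(X_n ≥ m), where X_n is a Binomial(n, λ/n) random variable and X_{n+1} is a Binomial(n+1, λ/(n+1)) random variable. Equivalently, ∑_{j=m}^{n+1} (n+1 choose j) (λ/(n+1))^j (1-λ/(n+1))^{n+1-j} ≤ ∑_{j=m}^{n} (n choose j) (λ/n)^j (1-λ/n)^{n-j}. -/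
/-!
Write `b n k` for the Bernstein polynomial `P(Bin(n, x) = k)` and `T n m` for the tail
`P(Bin(n, x) ≥ m)`. Conditioning on the last trial gives
`T (n + 1) (k + 1) = T n (k + 1) + x * b n k`. At `x = λ / (n + 1)` the coefficient `x` equals
`λ - n * x`, while at `x = λ / n` the quantity `λ - n * x` vanishes. Hence
`F x = T n (k + 1) x + (λ - n * x) * b n k x` takes the value of the tail for `n + 1` trials at
`λ / (n + 1)` and of the tail for `n` trials at `λ / n`. Its derivative satisfies
`x * (1 - x) * F' x = (n * x - k) * ((n + 1) * x - λ) * b n k x`. For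
`x ≥ λ / (n + 1)` the factor `(n + 1) * x - λ` is nonnegative, and so is `n * x - k` as soon as
`k * (n + 1) ≤ n * λ`; hence `F` is nondecreasing from `λ / (n + 1)` to `λ / n`.
-/

open Finset Polynomial

section BernsteinPolynomial

variable (R : Type*) [CommRing R] (n k : ℕ)

theorem bernsteinPolynomial_succ_succ :
    bernsteinPolynomial R (n + 1) (k + 1) =
      X * bernsteinPolynomial R n k + (1 - X) * bernsteinPolynomial R n (k + 1) := by
  rcases lt_or_ge k n with hkn | hnk
  · have hsub : n - k = n - (k + 1) + 1 := by omega
    simp only [bernsteinPolynomial, Nat.choose_succ_succ', Nat.add_sub_add_right, hsub]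
    push_cast
    ring
  · simp only [bernsteinPolynomial, Nat.choose_succ_succ', Nat.add_sub_add_right,
      Nat.choose_eq_zero_of_lt (Nat.lt_succ_of_le hnk)]
    push_cast
    ring

theorem succ_mul_X_mul_bernsteinPolynomial :
    (n + 1 : R[X]) * (X * bernsteinPolynomial R n k) =
      (k + 1 : R[X]) * bernsteinPolynomial R (n + 1) (k + 1) := by
  have hchoose : (n + 1 : R[X]) * n.choose k = (n + 1).choose (k + 1) * (k + 1) :=
    mod_cast congrArg (Nat.cast (R := R[X])) (Nat.add_one_mul_choose_eq n k)
  simp only [bernsteinPolynomial, Nat.add_sub_add_right]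
  linear_combination X ^ (k + 1) * (1 - X) ^ (n - k) * hchoose

theorem succ_mul_one_sub_X_mul_bernsteinPolynomial :
    (n + 1 : R[X]) * ((1 - X) * bernsteinPolynomial R n k) =
      (n + 1 - k : R[X]) * bernsteinPolynomial R (n + 1) k := by
  cases k with
  | zero => simp [bernsteinPolynomial, pow_succ']
  | succ k =>
    have hsuccess := succ_mul_X_mul_bernsteinPolynomial R n k
    have hpascal := bernsteinPolynomial_succ_succ R n k
    push_cast
    linear_combination -hsuccess - (n + 1 : R[X]) * hpascal

theorem X_mul_one_sub_X_mul_derivative_bernsteinPolynomial :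
    X * (1 - X) * derivative (bernsteinPolynomial R n k) =
      ((k : R[X]) - (n : R[X]) * X) * bernsteinPolynomial R n k := by
  rcases n with _ | n
  · cases k <;> simp [bernsteinPolynomial]
  rcases k with _ | k
  · have hfail := succ_mul_one_sub_X_mul_bernsteinPolynomial R n 0
    rw [bernsteinPolynomial.derivative_zero, Nat.add_sub_cancel]
    push_cast at hfail ⊢
    linear_combination -X * hfail
  · have hsuccess := succ_mul_X_mul_bernsteinPolynomial R n k
    have hfail := succ_mul_one_sub_X_mul_bernsteinPolynomial R n (k + 1)
    rw [bernsteinPolynomial.derivative_succ_aux]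
    push_cast at hfail ⊢
    linear_combination (1 - X) * hsuccess - X * hfail

theorem sum_Icc_bernsteinPolynomial_sub_succ :
    ∑ j ∈ Icc k n, (bernsteinPolynomial R n j - bernsteinPolynomial R n (j + 1)) =
      bernsteinPolynomial R n k := by
  rcases le_or_gt k (n + 1) with hk | hk
  · rw [← Ico_add_one_right_eq_Icc, ← neg_inj, ← sum_neg_distrib]
    simp only [neg_sub]
    rw [sum_Ico_sub _ hk, bernsteinPolynomial.eq_zero_of_lt R n.lt_succ_self, zero_sub]
  · rw [Icc_eq_empty (by omega), sum_empty, bernsteinPolynomial.eq_zero_of_lt R (by omega)]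

end BernsteinPolynomial

theorem bernsteinPolynomial_eval_nonneg {R : Type*} [CommRing R] [PartialOrder R]
    [IsOrderedRing R] (n k : ℕ) {x : R} (hx₀ : 0 ≤ x) (hx₁ : x ≤ 1) :
    0 ≤ (bernsteinPolynomial R n k).eval x := by
  simp only [bernsteinPolynomial, eval_mul, eval_natCast, eval_pow, eval_X, eval_sub, eval_one]
  exact mul_nonneg (by positivity) (pow_nonneg (sub_nonneg.2 hx₁) _)

section BinomialTail

variable (R : Type*) [CommRing R] (n m k : ℕ)

/-- The upper tail `P(S ≥ m)` of a `Binomial(n, p)` variable `S`, as a polynomial in the success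
probability `p`. -/
noncomputable def binomialTail : R[X] :=
  ∑ j ∈ Icc m n, bernsteinPolynomial R n j

variable {R} in
theorem binomialTail_eval (x : R) :
    (binomialTail R n m).eval x =
      ∑ j ∈ Icc m n, (n.choose j : R) * x ^ j * (1 - x) ^ (n - j) := by
  simp [binomialTail, bernsteinPolynomial, eval_finsetSum]

theorem sum_Icc_bernsteinPolynomial_succ :
    ∑ j ∈ Icc k n, bernsteinPolynomial R n (j + 1) = binomialTail R n (k + 1) := by
  rcases le_or_gt k n with hkn | hnk
  · simp only [binomialTail, ← Ico_add_one_right_eq_Icc]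
    rw [sum_Ico_add' (bernsteinPolynomial R n) k (n + 1) 1, sum_Ico_succ_top (by omega),
      bernsteinPolynomial.eq_zero_of_lt R n.lt_succ_self, add_zero]
  · rw [binomialTail, Icc_eq_empty (by omega), Icc_eq_empty (by omega), sum_empty, sum_empty]

theorem binomialTail_succ_succ_eq_sum :
    binomialTail R (n + 1) (k + 1) = ∑ j ∈ Icc k n, bernsteinPolynomial R (n + 1) (j + 1) := by
  simp only [binomialTail, ← Ico_add_one_right_eq_Icc]
  exact (sum_Ico_add' _ k (n + 1) 1).symm

theorem binomialTail_succ_succ :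
    binomialTail R (n + 1) (k + 1) = binomialTail R n (k + 1) + X * bernsteinPolynomial R n k := by
  have hpascal (j : ℕ) : bernsteinPolynomial R (n + 1) (j + 1) = bernsteinPolynomial R n (j + 1) +
      X * (bernsteinPolynomial R n j - bernsteinPolynomial R n (j + 1)) := by
    rw [bernsteinPolynomial_succ_succ]
    ring
  simp only [binomialTail_succ_succ_eq_sum, hpascal, sum_add_distrib, ← mul_sum,
    sum_Icc_bernsteinPolynomial_succ, sum_Icc_bernsteinPolynomial_sub_succ]

theorem derivative_binomialTail_succ_succ :
    derivative (binomialTail R (n + 1) (k + 1)) = (n + 1 : R[X]) * bernsteinPolynomial R n k := by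
  simp only [binomialTail_succ_succ_eq_sum, bernsteinPolynomial.derivative_succ_aux, derivative_sum,
    ← mul_sum, sum_Icc_bernsteinPolynomial_sub_succ]

end BinomialTail

section BinomialTailInterpolant

variable {R : Type*} [CommRing R] (n k : ℕ) (lam : R)

/-- The polynomial joining the tail `P(S ≥ k + 1)` of `n` trials to that of `n + 1` trials with the
same mean `lam`: its values at `lam / n` and `lam / (n + 1)` are these two tails. -/
noncomputable def binomialTailInterpolant : R[X] :=
  binomialTail R n (k + 1) + (C lam - (n : R[X]) * X) * bernsteinPolynomial R n k

theorem X_mul_one_sub_X_mul_derivative_binomialTailInterpolant :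
    X * (1 - X) * derivative (binomialTailInterpolant n k lam) =
      ((n : R[X]) * X - (k : R[X])) * ((n + 1 : R[X]) * X - C lam) *
        bernsteinPolynomial R n k := by
  rcases n with _ | n
  · cases k <;> simp [binomialTailInterpolant, binomialTail, bernsteinPolynomial]
  have hfail := succ_mul_one_sub_X_mul_bernsteinPolynomial R n k
  have hderiv := X_mul_one_sub_X_mul_derivative_bernsteinPolynomial R (n + 1) k
  simp only [binomialTailInterpolant, derivative_add, derivative_mul, derivative_sub, derivative_C,
    derivative_natCast, derivative_X, derivative_binomialTail_succ_succ]
  push_cast at hderiv ⊢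
  linear_combination X * hfail + (C lam - (n + 1 : R[X]) * X) * hderiv

end BinomialTailInterpolant

section Endpoints

variable {K : Type*} [Field K] {n : ℕ} (k : ℕ) (lam : K)

theorem binomialTailInterpolant_eval_div (hn : (n : K) ≠ 0) :
    (binomialTailInterpolant n k lam).eval (lam / n) =
      (binomialTail K n (k + 1)).eval (lam / n) := by
  simp [binomialTailInterpolant, mul_div_cancel₀ lam hn]

theorem binomialTailInterpolant_eval_div_succ (hn : (n + 1 : K) ≠ 0) :
    (binomialTailInterpolant n k lam).eval (lam / (n + 1)) =
      (binomialTail K (n + 1) (k + 1)).eval (lam / (n + 1)) := by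
  have hcoeff : lam - n * (lam / (n + 1)) = lam / (n + 1) := by
    field_simp
    ring
  simp [binomialTailInterpolant, binomialTail_succ_succ, hcoeff]

end Endpoints

theorem derivative_binomialTailInterpolant_eval_nonneg {R : Type*} [CommRing R] [LinearOrder R]
    [IsStrictOrderedRing R] {n k : ℕ} {lam x : R} (hx₀ : 0 < x) (hx₁ : x < 1)
    (hk : (k : R) ≤ n * x) (hlam : lam ≤ (n + 1) * x) :
    0 ≤ (derivative (binomialTailInterpolant n k lam)).eval x := by
  have hfactor := congrArg (eval x) (X_mul_one_sub_X_mul_derivative_binomialTailInterpolant n k lam)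
  simp only [eval_mul, eval_sub, eval_add, eval_X, eval_one, eval_natCast, eval_C] at hfactor
  refine nonneg_of_mul_nonneg_right ?_ (mul_pos hx₀ (sub_pos.2 hx₁))
  rw [hfactor]
  exact mul_nonneg (mul_nonneg (sub_nonneg.2 hk) (sub_nonneg.2 hlam))
    (bernsteinPolynomial_eval_nonneg _ _ hx₀.le hx₁.le)

theorem binomialTailInterpolant_monotoneOn {n k : ℕ} {lam : ℝ} (hlam₀ : 0 ≤ lam)
    (hlam : (k : ℝ) * (n + 1) ≤ n * lam) :
    MonotoneOn (fun x ↦ (binomialTailInterpolant n k lam).eval x) (Set.Icc (lam / (n + 1)) 1) := by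
  have hn₁ : (0 : ℝ) < n + 1 := by positivity
  refine monotoneOn_of_deriv_nonneg (convex_Icc _ _) (Polynomial.continuousOn _)
    (Polynomial.differentiableOn _) fun x hx ↦ ?_
  obtain ⟨hlamx, hx₁⟩ : lam / (n + 1) < x ∧ x < 1 := by
    simpa only [interior_Icc, Set.mem_Ioo] using hx
  have hx₀ : 0 < x := (div_nonneg hlam₀ hn₁.le).trans_lt hlamx
  have hk : (k : ℝ) ≤ n * x :=
    calc (k : ℝ) ≤ n * (lam / (n + 1)) := by rwa [← mul_div_assoc, le_div_iff₀ hn₁]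
      _ ≤ n * x := by gcongr
  rw [Polynomial.deriv]
  exact derivative_binomialTailInterpolant_eval_nonneg hx₀ hx₁ hk ((div_le_iff₀' hn₁).1 hlamx.le)

theorem binomial_tail_antitone_in_trials_general (k n : ℕ) (hn : 0 < n) (lam : ℝ)
    (hlam : (k : ℝ) * (n + 1) ≤ n * lam) (hlamn : lam ≤ n) :
    ∑ j ∈ Finset.Icc (k + 1) (n + 1),
        ((n + 1).choose j : ℝ) * (lam / (n + 1)) ^ j * (1 - lam / (n + 1)) ^ (n + 1 - j) ≤
      ∑ j ∈ Finset.Icc (k + 1) n,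
        (n.choose j : ℝ) * (lam / n) ^ j * (1 - lam / n) ^ (n - j) := by
  have hn₀ : (0 : ℝ) < n := Nat.cast_pos.2 hn
  have hlam₀ : 0 ≤ lam := nonneg_of_mul_nonneg_right (le_trans (by positivity) hlam) hn₀
  have hdiv : lam / (n + 1) ≤ lam / n := by gcongr; linarith
  have hdiv₁ : lam / n ≤ 1 := (div_le_one hn₀).2 hlamn
  rw [← binomialTail_eval, ← binomialTail_eval,
    ← binomialTailInterpolant_eval_div_succ k lam (by positivity),
    ← binomialTailInterpolant_eval_div k lam hn₀.ne']
  exact binomialTailInterpolant_monotoneOn hlam₀ hlam ⟨le_rfl, hdiv.trans hdiv₁⟩ ⟨hdiv, hdiv₁⟩ hdiv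

/-- For an integer `m ≥ 1`, a real `λ > m`, and an integer `n ≥ λ`,
the Binomial upper tail with fixed mean `λ` is nonincreasing in the number of trials:
`P(X_{n+1} ≥ m) ≤ P(X_n ≥ m)` where `X_n ~ Binomial(n, λ/n)` and
`X_{n+1} ~ Binomial(n+1, λ/(n+1))`. -/
theorem binomial_tail_antitone_in_trials (m : ℕ) (hm : 1 ≤ m) (lam : ℝ)
    (hlam : (m : ℝ) < lam) (n : ℕ) (hn : lam ≤ (n : ℝ)) :
    ∑ j ∈ Finset.Icc m (n + 1),
        ((n + 1).choose j : ℝ) * (lam / (n + 1)) ^ j * (1 - lam / (n + 1)) ^ (n + 1 - j) ≤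
      ∑ j ∈ Finset.Icc m n, (n.choose j : ℝ) * (lam / n) ^ j * (1 - lam / n) ^ (n - j) := by
  obtain ⟨k, rfl⟩ := Nat.exists_eq_add_of_le' hm
  push_cast at hlam
  exact binomial_tail_antitone_in_trials_general k n (by rify; linarith) lam (by nlinarith) hn
end

section
/- Fix natural numbers n and m and a real number t ∈ [0, n]. For p = (p_1, ..., p_n) ∈ [0,1]^n, let F_m(p) = P(x_1 + ... + x_n > m), where x_1, ..., x_n are independent Bernoulli random variables with means p_1, ..., p_n. Then there exists a vector p* ∈ [0,1]^n with ∑_{i=1}^n p*_i = t that minimizes F_m over the set {p ∈ [0,1]^n : ∑_{i=1}^n p_i = t} and in which any two coordinates p*_i, p*_j that both lie strictly in the open interval (0,1) are equal. -/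
/-!
We model a family of `n` independent Bernoulli random variables with means
`p : Fin n → ℝ` by their joint (product) distribution on `Fin n → Bool`:
the outcome `ω` has probability `∏ i, (if ω i then p i else 1 - p i)`.
-/

/-- number of successes in outcome `ω` -/
def bCount {n : ℕ} (ω : Fin n → Bool) : ℕ := ∑ i, if ω i then 1 else 0

/-- joint probability of the outcome `ω` for independent Bernoulli variables
with means `p` -/
noncomputable def bernWeight {n : ℕ} (p : Fin n → ℝ) (ω : Fin n → Bool) : ℝ :=
  ∏ i, if ω i then p i else 1 - p i

/-- probability of the event `E` under independent Bernoulli variables with means `p` -/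
noncomputable def bernPr {n : ℕ} (p : Fin n → ℝ) (E : (Fin n → Bool) → Prop)
    [DecidablePred E] : ℝ :=
  ∑ ω ∈ Finset.univ.filter E, bernWeight p ω

/-!
For a symmetric function `F` that is affine in each coordinate, the restriction of `F` to the
coordinates `i, j` is `α + β (x + y) + γ x y`. At a minimizer with `p i ≠ p j` interior, the
first-order condition along `x + y = p i + p j` forces `γ = 0`, so both coordinates may be replaced
by their average without changing `F`. This strictly decreases `∑ p k ^ 2`, which is impossible if
`p` has the least sum of squares among all minimizers.
-/

open Function Set

variable {ι : Type*}

theorem exists_isMinOn_and_forall_le_of_isCompact {X α β : Type*} [TopologicalSpace X]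
    [LinearOrder α] [LinearOrder β] {s : Set X} {f : X → α} {g : X → β} (hs : IsCompact s)
    (hne : s.Nonempty) (hf : LowerSemicontinuousOn f s) (hg : LowerSemicontinuousOn g s) :
    ∃ x ∈ s, IsMinOn f s x ∧ ∀ y ∈ s, f y ≤ f x → g x ≤ g y := by
  obtain ⟨x₀, hx₀, hmin₀⟩ := hf.exists_isMinOn hne hs
  have hsublevel : IsCompact (s ∩ f ⁻¹' Iic (f x₀)) := hf.isCompact_inter_preimage_Iic hs (f x₀)
  have hx₀_mem : x₀ ∈ s ∩ f ⁻¹' Iic (f x₀) := ⟨hx₀, self_mem_Iic⟩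
  obtain ⟨x, ⟨hx, hfx⟩, hmin⟩ :=
    (hg.mono inter_subset_left).exists_isMinOn ⟨x₀, hx₀_mem⟩ hsublevel
  exact ⟨x, hx, fun y hy => le_trans hfx (hmin₀ hy), fun y hy hyx => hmin ⟨hy, hyx.trans hfx⟩⟩

section Multiaffine

variable [DecidableEq ι]

/-- `F` is multiaffine: affine in each coordinate when the others are held fixed. Affinity is
expressed as interpolation between the values of `F` at coordinate `0` and at coordinate `1`. -/
def IsMultiaffine (F : (ι → ℝ) → ℝ) : Prop :=
  ∀ (p : ι → ℝ) (i : ι) (x : ℝ),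
    F (update p i x) = (1 - x) * F (update p i 0) + x * F (update p i 1)

namespace IsMultiaffine

variable {F : (ι → ℝ) → ℝ}

theorem continuous_piecewise (hF : IsMultiaffine F) (s : Finset ι) :
    ∀ q : ι → ℝ, Continuous fun p : ι → ℝ => F (s.piecewise p q) := by
  induction s using Finset.induction_on with
  | empty => exact fun q => by simpa only [Finset.piecewise_empty] using continuous_const
  | insert i s hi ih =>
    intro q
    have hinterp (p : ι → ℝ) : F ((insert i s).piecewise p q) =
        (1 - p i) * F (s.piecewise p (update q i 0)) + p i * F (s.piecewise p (update q i 1)) := by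
      rw [Finset.piecewise_insert, hF, s.update_piecewise_of_notMem _ _ hi,
        s.update_piecewise_of_notMem _ _ hi]
    simp only [hinterp]
    exact ((continuous_const.sub (continuous_apply i)).mul (ih _)).add
      ((continuous_apply i).mul (ih _))

protected theorem continuous [Finite ι] (hF : IsMultiaffine F) : Continuous F := by
  have := Fintype.ofFinite ι
  simpa only [Finset.piecewise_univ] using hF.continuous_piecewise Finset.univ 0

theorem exists_update_update_eq (hF : IsMultiaffine F) {i j : ι} (hij : i ≠ j)
    (hswap : ∀ p, F (p ∘ Equiv.swap i j) = F p) (p : ι → ℝ) :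
    ∃ α β γ : ℝ, ∀ x y, F (update (update p i x) j y) = α + β * (x + y) + γ * (x * y) := by
  let G (x y : ℝ) : ℝ := F (update (update p i x) j y)
  have hG_left (x y : ℝ) : G x y = (1 - x) * G 0 y + x * G 1 y := by
    simp only [G, update_comm hij]
    exact hF _ i x
  have hG_right (x y : ℝ) : G x y = (1 - y) * G x 0 + y * G x 1 := hF _ j y
  have hG_symm : G 1 0 = G 0 1 := by
    simp only [G]
    rw [← hswap, Equiv.comp_swap_eq_update]
    simp [hij, update_comm hij]
  refine ⟨G 0 0, G 0 1 - G 0 0, G 0 0 + G 1 1 - 2 * G 0 1, fun x y => ?_⟩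
  change G x y = _
  rw [hG_left, hG_right 0, hG_right 1, hG_symm]
  ring

end IsMultiaffine

end Multiaffine

section BoxSlice

variable [Fintype ι] {a b t : ℝ}

/-- The feasible set of the minimization: the slice `∑ i, p i = t` of the cube `[a, b]^ι`. -/
def boxSlice (ι : Type*) [Fintype ι] (a b t : ℝ) : Set (ι → ℝ) :=
  {p | (∀ i, p i ∈ Icc a b) ∧ ∑ i, p i = t}

theorem isCompact_boxSlice : IsCompact (boxSlice ι a b t) := by
  have hbox : IsCompact {p : ι → ℝ | ∀ i, p i ∈ Icc a b} :=
    isCompact_pi_infinite fun _ => isCompact_Icc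
  exact hbox.inter_right (isClosed_eq (by fun_prop) continuous_const)

theorem boxSlice_nonempty (hat : Fintype.card ι * a ≤ t) (htb : t ≤ Fintype.card ι * b) :
    (boxSlice ι a b t).Nonempty := by
  rcases isEmpty_or_nonempty ι with hι | hι
  · refine ⟨0, isEmptyElim, ?_⟩
    simp only [Fintype.card_of_isEmpty, Nat.cast_zero, zero_mul] at hat htb
    simpa using le_antisymm hat htb
  · have hcard : (0 : ℝ) < Fintype.card ι := Nat.cast_pos.2 Fintype.card_pos
    refine ⟨fun _ => t / Fintype.card ι,
      fun _ => ⟨(le_div_iff₀' hcard).2 hat, (div_le_iff₀' hcard).2 htb⟩, ?_⟩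
    simp [mul_div_cancel₀ t hcard.ne']

variable [DecidableEq ι]

theorem sum_comp_update {M α : Type*} [AddCommGroup M] (f : α → M) (p : ι → α) (i : ι) (x : α) :
    ∑ k, f (update p i x k) = ∑ k, f (p k) + (f x - f (p i)) := by
  simp only [apply_update (fun _ => f), Finset.sum_update_of_mem (Finset.mem_univ i),
    Finset.sum_eq_add_sum_sdiff_singleton_of_mem (Finset.mem_univ i) fun k => f (p k)]
  abel

theorem sum_comp_update_update {M α : Type*} [AddCommGroup M] (f : α → M) (p : ι → α) {i j : ι}
    (hij : i ≠ j) (x y : α) :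
    ∑ k, f (update (update p i x) j y k) =
      ∑ k, f (p k) + (f x + f y - (f (p i) + f (p j))) := by
  rw [sum_comp_update, sum_comp_update, update_of_ne hij.symm]
  abel

theorem update_update_mem_boxSlice {p : ι → ℝ} (hp : p ∈ boxSlice ι a b t) {i j : ι} (hij : i ≠ j)
    {x y : ℝ} (hx : x ∈ Icc a b) (hy : y ∈ Icc a b) (hxy : x + y = p i + p j) :
    update (update p i x) j y ∈ boxSlice ι a b t := by
  refine ⟨fun k => ?_, ?_⟩
  · simp only [update_apply]
    split_ifs
    exacts [hy, hx, hp.1 k]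
  · simpa [hxy, hp.2] using sum_comp_update_update id p hij x y

theorem sum_sq_update_average_lt (p : ι → ℝ) {i j : ι} (hne : p i ≠ p j) :
    ∑ k, update (update p i ((p i + p j) / 2)) j ((p i + p j) / 2) k ^ 2 < ∑ k, p k ^ 2 := by
  have hij : i ≠ j := ne_of_apply_ne p hne
  rw [sum_comp_update_update (· ^ 2) p hij]
  nlinarith [sq_pos_of_ne_zero (sub_ne_zero.2 hne)]

theorem IsMultiaffine.update_update_eq_of_isMinOn {F : (ι → ℝ) → ℝ} (hF : IsMultiaffine F)
    {i j : ι} (hswap : ∀ p, F (p ∘ Equiv.swap i j) = F p) {p : ι → ℝ}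
    (hp : p ∈ boxSlice ι a b t) (hmin : IsMinOn F (boxSlice ι a b t) p)
    (hi : p i ∈ Ioo a b) (hj : p j ∈ Ioo a b) (hne : p i ≠ p j)
    {x y : ℝ} (hxy : x + y = p i + p j) :
    F (update (update p i x) j y) = F p := by
  have hij : i ≠ j := ne_of_apply_ne p hne
  obtain ⟨α, β, γ, hpair⟩ := hF.exists_update_update_eq hij hswap p
  have hFp : F p = α + β * (p i + p j) + γ * (p i * p j) := by
    simpa only [update_eq_self] using hpair (p i) (p j)
  have hlocal : IsLocalMin (fun z => γ * (z * (p i + p j - z))) (p i) := by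
    have hmem_left : ∀ᶠ z in nhds (p i), z ∈ Icc a b := Icc_mem_nhds hi.1 hi.2
    have hmem_right : ∀ᶠ z in nhds (p i), p i + p j - z ∈ Icc a b :=
      ContinuousAt.eventually_mem (by fun_prop)
        (by simpa only [add_sub_cancel_left] using Icc_mem_nhds hj.1 hj.2)
    filter_upwards [hmem_left, hmem_right] with z hz hz'
    have hsum : z + (p i + p j - z) = p i + p j := add_sub_cancel _ _
    have hle : F p ≤ F (update (update p i z) j (p i + p j - z)) :=
      hmin (update_update_mem_boxSlice hp hij hz hz' hsum)
    rw [hFp, hpair, hsum] at hle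
    simpa only [add_sub_cancel_left] using le_of_add_le_add_left hle
  have hderiv : HasDerivAt (fun z => γ * (z * (p i + p j - z))) (γ * (p j - p i)) (p i) := by
    exact (((hasDerivAt_id' (p i)).mul ((hasDerivAt_id' (p i)).const_sub (p i + p j))).const_mul
      γ).congr_deriv (by ring)
  have hγ : γ = 0 :=
    (mul_eq_zero.1 (hlocal.hasDerivAt_eq_zero hderiv)).resolve_right (sub_ne_zero.2 hne.symm)
  rw [hpair, hFp, hγ, hxy]
  ring

theorem exists_minimizer_with_equal_interior_coords_general {F : (ι → ℝ) → ℝ}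
    (hF : IsMultiaffine F) (hsymm : ∀ (σ : Equiv.Perm ι) (p : ι → ℝ), F (p ∘ σ) = F p)
    (hat : Fintype.card ι * a ≤ t) (htb : t ≤ Fintype.card ι * b) :
    ∃ p ∈ boxSlice ι a b t, IsMinOn F (boxSlice ι a b t) p ∧
      ∀ i j, p i ∈ Ioo a b → p j ∈ Ioo a b → p i = p j := by
  have hsq : Continuous fun p : ι → ℝ => ∑ k, p k ^ 2 := by fun_prop
  obtain ⟨p, hp, hmin, hleast⟩ := exists_isMinOn_and_forall_le_of_isCompact isCompact_boxSlice
    (boxSlice_nonempty hat htb) (hF.continuous.lowerSemicontinuous.lowerSemicontinuousOn _)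
    (hsq.lowerSemicontinuous.lowerSemicontinuousOn _)
  refine ⟨p, hp, hmin, fun i j hi hj => ?_⟩
  by_contra hne
  have havg : (p i + p j) / 2 ∈ Icc a b := by
    constructor <;> linarith [hi.1, hi.2, hj.1, hj.2]
  have hsum : (p i + p j) / 2 + (p i + p j) / 2 = p i + p j := add_halves _
  have hmem := update_update_mem_boxSlice hp (ne_of_apply_ne p hne) havg havg hsum
  have hvalue := hF.update_update_eq_of_isMinOn (hsymm _) hp hmin hi hj hne hsum
  exact (hleast _ hmem hvalue.le).not_gt (sum_sq_update_average_lt p hne)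

end BoxSlice

section Bernoulli

variable {n : ℕ}

theorem bCount_comp_perm (ω : Fin n → Bool) (σ : Equiv.Perm (Fin n)) :
    bCount (ω ∘ σ) = bCount ω :=
  Equiv.sum_comp σ fun i => if ω i then 1 else 0

theorem bernWeight_comp_perm (p : Fin n → ℝ) (ω : Fin n → Bool) (σ : Equiv.Perm (Fin n)) :
    bernWeight (p ∘ σ) (ω ∘ σ) = bernWeight p ω :=
  Equiv.prod_comp σ fun i => if ω i then p i else 1 - p i

theorem bernPr_comp_perm (E : (Fin n → Bool) → Prop) [DecidablePred E] (σ : Equiv.Perm (Fin n))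
    (hE : ∀ ω, E (ω ∘ σ) ↔ E ω) (p : Fin n → ℝ) : bernPr (p ∘ σ) E = bernPr p E := by
  simp only [bernPr, Finset.sum_filter]
  rw [← Equiv.sum_comp (σ.symm.arrowCongr (Equiv.refl Bool))]
  refine Finset.sum_congr rfl fun ω _ => ?_
  change (if E (ω ∘ σ) then bernWeight (p ∘ σ) (ω ∘ σ) else 0) = _
  simp only [hE, bernWeight_comp_perm]

theorem bernWeight_update (p : Fin n → ℝ) (ω : Fin n → Bool) (i : Fin n) (x : ℝ) :
    bernWeight (update p i x) ω = (if ω i then x else 1 - x) *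
      ∏ k ∈ Finset.univ \ {i}, if ω k then p k else 1 - p k :=
  calc
    bernWeight (update p i x) ω
      = ∏ k, update (fun k => if ω k then p k else 1 - p k) i (if ω i then x else 1 - x) k :=
        Finset.prod_congr rfl fun k _ =>
          apply_update (fun k r => if ω k then r else 1 - r) p i x k
    _ = _ := Finset.prod_update_of_mem (Finset.mem_univ i) _ _

theorem isMultiaffine_bernWeight (ω : Fin n → Bool) :
    IsMultiaffine fun p => bernWeight p ω := by
  intro p i x
  simp only [bernWeight_update]
  split_ifs <;> ring

theorem isMultiaffine_bernPr (E : (Fin n → Bool) → Prop) [DecidablePred E] :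
    IsMultiaffine fun p => bernPr p E := by
  intro p i x
  simp only [bernPr, Finset.mul_sum, ← Finset.sum_add_distrib]
  exact Finset.sum_congr rfl fun ω _ => isMultiaffine_bernWeight ω p i x

end Bernoulli

/-- Fix `n`, `m` and `t ∈ [0, n]`.  Let
`F_m(p) = P(x_1 + ⋯ + x_n > m)` for independent Bernoulli variables `x_i` with
means `p_i`.  Then there is a minimizer `p*` of `F_m` over
`{p ∈ [0,1]^n : ∑ i, p i = t}` in which any two coordinates lying strictly in
`(0,1)` are equal. -/
theorem exists_minimizer_with_equal_interior_coords (n m : ℕ) (t : ℝ)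
    (ht0 : 0 ≤ t) (htn : t ≤ (n : ℝ)) :
    ∃ p : Fin n → ℝ,
      (∀ i, 0 ≤ p i ∧ p i ≤ 1) ∧ (∑ i, p i) = t ∧
      (∀ q : Fin n → ℝ, (∀ i, 0 ≤ q i ∧ q i ≤ 1) → (∑ i, q i) = t →
        bernPr p (fun ω => m < bCount ω) ≤ bernPr q (fun ω => m < bCount ω)) ∧
      (∀ i j, p i ∈ Set.Ioo (0 : ℝ) 1 → p j ∈ Set.Ioo (0 : ℝ) 1 → p i = p j) := by
  obtain ⟨p, hp, hmin, heq⟩ := exists_minimizer_with_equal_interior_coords_general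
    (a := 0) (b := 1) (t := t) (isMultiaffine_bernPr fun ω : Fin n → Bool => m < bCount ω)
    (fun σ => bernPr_comp_perm _ σ fun ω => by rw [bCount_comp_perm])
    (by simpa using ht0) (by simpa using htn)
  exact ⟨p, hp.1, hp.2, fun q hq hqt => hmin ⟨hq, hqt⟩, heq⟩
end

section
/- Let m ≥ 2 be an integer, let x_1, ..., x_n be independent Bernoulli random variables with means μ_1, ..., μ_n ∈ [0,1], and let y_1, ..., y_n be independent Bernoulli random variables with means ((m-1)/m)·μ_1, ..., ((m-1)/m)·μ_n. Then E[min(x_1 + ... + x_n, m)] / m ≥ E[min(y_1 + ... + y_n, m-1)] / (m-1). -/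
/-- expectation of `g(x_1 + ⋯ + x_n)` for independent Bernoulli variables `x_i`
with means `p` -/
noncomputable def bernExp {n : ℕ} (p : Fin n → ℝ) (g : ℕ → ℝ) : ℝ :=
  ∑ ω : Fin n → Bool, bernWeight p ω * g (bCount ω)

/-!
Keeping each success of the `x_i` independently with probability `q` yields Bernoulli variables
`y_i` with means `q * μ_i`, so given `∑ x_i = k` the sum `∑ y_i` is binomial with parameters `k`
and `q`. By Jensen's inequality, `E[g (∑ y_i)] ≤ E[g (q * ∑ x_i)]` for every concave `g`. For
`q = a / b` and `g x = min x a` the right-hand side is `q * E[min (∑ x_i) b]`.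
-/

section BernExp

variable {n : ℕ}

theorem bernWeight_nonneg {p : Fin n → ℝ} (hp : ∀ i, p i ∈ Set.Icc 0 1) (ω : Fin n → Bool) :
    0 ≤ bernWeight p ω := by
  refine Finset.prod_nonneg fun i _ => ?_
  split_ifs
  · exact (hp i).1
  · exact sub_nonneg.2 (hp i).2

theorem bernExp_mono {p : Fin n → ℝ} (hp : ∀ i, p i ∈ Set.Icc 0 1) {f g : ℕ → ℝ} (hfg : f ≤ g) :
    bernExp p f ≤ bernExp p g :=
  Finset.sum_le_sum fun ω _ => mul_le_mul_of_nonneg_left (hfg _) (bernWeight_nonneg hp ω)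

theorem bernExp_add (p : Fin n → ℝ) (f g : ℕ → ℝ) :
    bernExp p (fun c => f c + g c) = bernExp p f + bernExp p g := by
  simp only [bernExp, mul_add, Finset.sum_add_distrib]

theorem bernExp_const_mul (p : Fin n → ℝ) (a : ℝ) (g : ℕ → ℝ) :
    bernExp p (fun c => a * g c) = a * bernExp p g := by
  simp only [bernExp, Finset.mul_sum, mul_left_comm]

theorem bernExp_zero (p : Fin 0 → ℝ) (g : ℕ → ℝ) : bernExp p g = g 0 := by
  simp [bernExp, bernWeight, bCount]

theorem bernExp_succ (p : Fin (n + 1) → ℝ) (g : ℕ → ℝ) :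
    bernExp p g = p 0 * bernExp (fun i => p i.succ) (fun c => g (c + 1)) +
      (1 - p 0) * bernExp (fun i => p i.succ) g := by
  unfold bernExp
  rw [← (Fin.consEquiv fun _ => Bool).sum_comp, Fintype.sum_prod_type, Fintype.sum_bool,
    Finset.mul_sum, Finset.mul_sum]
  simp [bernWeight, bCount, Fin.prod_univ_succ, Fin.sum_univ_succ, Fin.consEquiv, add_comm,
    mul_assoc]

theorem bernExp_const (p : Fin n → ℝ) (a : ℝ) : bernExp p (fun _ => a) = a := by
  induction n with
  | zero => exact bernExp_zero p _
  | succ n ih => rw [bernExp_succ, ih]; ring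

theorem bernExp_natCast (p : Fin n → ℝ) : bernExp p (fun c => (c : ℝ)) = ∑ i, p i := by
  induction n with
  | zero => simp [bernExp_zero]
  | succ n ih =>
    simp only [bernExp_succ p, Nat.cast_add, Nat.cast_one, bernExp_add, bernExp_const, ih,
      Fin.sum_univ_succ]
    ring

theorem bernExp_le_of_concaveOn {p : Fin n → ℝ} (hp : ∀ i, p i ∈ Set.Icc 0 1) {g : ℝ → ℝ}
    (hg : ConcaveOn ℝ (Set.Ici 0) g) : bernExp p (fun c => g c) ≤ g (∑ i, p i) := by
  have weights_sum : ∑ ω, bernWeight p ω = 1 := by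
    simpa only [bernExp, mul_one] using bernExp_const p 1
  rw [← bernExp_natCast]
  exact hg.le_map_sum (fun ω _ => bernWeight_nonneg hp ω) weights_sum
    fun ω _ => Set.mem_Ici.2 (Nat.cast_nonneg (bCount ω))

theorem bernExp_mul_eq_bernExp_bernExp (q : ℝ) (p : Fin n → ℝ) (g : ℕ → ℝ) :
    bernExp (fun i => q * p i) g = bernExp p (fun k => bernExp (fun _ : Fin k => q) g) := by
  induction n generalizing g with
  | zero => simp only [bernExp_zero]
  | succ n ih =>
    rw [bernExp_succ, bernExp_succ p, ih, ih]
    simp only [bernExp_succ (fun _ => q), bernExp_add, bernExp_const_mul]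
    ring

theorem bernExp_mul_le_of_concaveOn {q : ℝ} (hq : q ∈ Set.Icc 0 1) {p : Fin n → ℝ}
    (hp : ∀ i, p i ∈ Set.Icc 0 1) {g : ℝ → ℝ} (hg : ConcaveOn ℝ (Set.Ici 0) g) :
    bernExp (fun i => q * p i) (fun c => g c) ≤ bernExp p (fun k => g (q * k)) := by
  rw [bernExp_mul_eq_bernExp_bernExp]
  refine bernExp_mono hp fun k => ?_
  simpa [mul_comm q] using bernExp_le_of_concaveOn (p := fun _ : Fin k => q) (fun _ => hq) hg

end BernExp

theorem bernoulli_min_expectation_monotone_general {n : ℕ} {a b : ℝ} (ha : 0 < a) (hab : a ≤ b)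
    {μ : Fin n → ℝ} (hμ : ∀ i, μ i ∈ Set.Icc 0 1) :
    bernExp (fun i => a / b * μ i) (fun c => min (c : ℝ) a) / a ≤
      bernExp μ (fun c => min (c : ℝ) b) / b := by
  have hb : 0 < b := ha.trans_le hab
  have hq : a / b ∈ Set.Icc 0 1 := ⟨by positivity, div_le_one_of_le₀ hab hb.le⟩
  have min_concave : ConcaveOn ℝ (Set.Ici 0) fun x : ℝ => min x a :=
    (concaveOn_id (convex_Ici 0)).inf (concaveOn_const a (convex_Ici 0))
  have min_scale (k : ℕ) : min (a / b * k) a = a / b * min (k : ℝ) b := by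
    rw [mul_min_of_nonneg _ _ hq.1, div_mul_cancel₀ a hb.ne']
  rw [div_le_iff₀ ha]
  calc bernExp (fun i => a / b * μ i) (fun c => min (c : ℝ) a)
      ≤ bernExp μ (fun k => min (a / b * k) a) := bernExp_mul_le_of_concaveOn hq hμ min_concave
    _ = a / b * bernExp μ (fun c => min (c : ℝ) b) := by simp only [min_scale, bernExp_const_mul]
    _ = bernExp μ (fun c => min (c : ℝ) b) / b * a := by ring

/-- For an integer `m ≥ 2`, independent Bernoulli variables
`x_1, …, x_n` with means `μ_i ∈ [0,1]` and independent Bernoulli variables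
`y_1, …, y_n` with means `((m-1)/m)·μ_i`, we have
`E[min(∑ x_i, m)] / m ≥ E[min(∑ y_i, m-1)] / (m-1)`. -/
theorem bernoulli_min_expectation_monotone (n m : ℕ) (hm : 2 ≤ m)
    (μ : Fin n → ℝ) (hμ : ∀ i, 0 ≤ μ i ∧ μ i ≤ 1) :
    bernExp (fun i => (((m : ℝ) - 1) / m) * μ i) (fun c => ((min c (m - 1) : ℕ) : ℝ)) /
        ((m : ℝ) - 1) ≤
      bernExp μ (fun c => ((min c m : ℕ) : ℝ)) / (m : ℝ) := by
  have hm' : (1 : ℝ) < m := by exact_mod_cast hm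
  simpa [Nat.cast_pred (show 0 < m by lia)] using
    bernoulli_min_expectation_monotone_general (sub_pos.2 hm') (sub_le_self _ zero_le_one) hμ
end

section
/- Let X = x_1 + ... + x_n be a sum of independent Bernoulli random variables with E[X] = μ. Then 2·P(X = 0) + P(X = 1) ≤ (2 + μ)·e^{-μ}; that is, among sums of independent Bernoulli random variables with total mean μ, the quantity 2·P(X=0) + P(X=1) is at most its value for a Poisson(μ) random variable. -/
/-!
Add the variables one at a time. Given a Bernoulli variable of mean `x` and an independent sum `Y`
of mean `m`, conditioning on the former turns `2·P(X = 0) + P(X = 1)` into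
`(1 - x)·(2·P(Y = 0) + P(Y = 1)) + x·P(Y = 0)`. By induction and `P(Y = 0) ≤ e^{-m}` this is at most
`((1 - x)·(2 + m) + x)·e^{-m}`, so everything reduces to the one-variable inequality
`(1 - x)·a + x ≤ (a + x)·e^{-x}` for `a ≥ 2`. The coefficient `2` is the critical one: for `a < 2`
the one-variable inequality fails for small `x > 0`.
-/

theorem monotone_two_add_mul_exp_neg_add_self :
    Monotone fun x : ℝ ↦ (2 + x) * Real.exp (-x) + x := by
  have hasDerivAt (x : ℝ) :
      HasDerivAt (fun x : ℝ ↦ (2 + x) * Real.exp (-x) + x) (1 - (1 + x) * Real.exp (-x)) x := by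
    have := (((hasDerivAt_id' x).const_add 2).mul (hasDerivAt_neg' x).exp).add (hasDerivAt_id' x)
    exact this.congr_deriv (by ring)
  refine monotone_of_hasDerivAt_nonneg hasDerivAt fun x ↦ sub_nonneg.2 ?_
  calc
    (1 + x) * Real.exp (-x) ≤ Real.exp x * Real.exp (-x) := by
      gcongr
      linarith [Real.add_one_le_exp x]
    _ = 1 := by rw [← Real.exp_add, add_neg_cancel, Real.exp_zero]

theorem one_sub_mul_add_self_le_add_mul_exp_neg {a x : ℝ} (ha : 2 ≤ a) (hx : 0 ≤ x) :
    (1 - x) * a + x ≤ (a + x) * Real.exp (-x) := by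
  have at_two : 2 - x ≤ (2 + x) * Real.exp (-x) := by
    have := monotone_two_add_mul_exp_neg_add_self hx
    simp only [add_zero, neg_zero, Real.exp_zero, mul_one] at this
    linarith
  calc
    (1 - x) * a + x = (a - 2) * (1 - x) + (2 - x) := by ring
    _ ≤ (a - 2) * Real.exp (-x) + (2 + x) * Real.exp (-x) := by
      gcongr
      exact Real.one_sub_le_exp_neg x
    _ = (a + x) * Real.exp (-x) := by ring

theorem prod_one_sub_le_exp_neg_sum {ι : Type*} (s : Finset ι) {p : ι → ℝ}
    (hp : ∀ i ∈ s, p i ≤ 1) : ∏ i ∈ s, (1 - p i) ≤ Real.exp (-∑ i ∈ s, p i) := by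
  rw [← Finset.sum_neg_distrib, Real.exp_sum]
  exact Finset.prod_le_prod (fun i hi ↦ sub_nonneg.2 (hp i hi))
    fun i _ ↦ Real.one_sub_le_exp_neg (p i)

theorem bCount_eq_zero_iff {n : ℕ} {ω : Fin n → Bool} : bCount ω = 0 ↔ ω = fun _ ↦ false := by
  simp [bCount, funext_iff]

theorem bCount_cons {n : ℕ} (b : Bool) (ω : Fin n → Bool) :
    bCount (Fin.cons b ω : Fin (n + 1) → Bool) = (if b then 1 else 0) + bCount ω := by
  simp only [bCount, Fin.sum_univ_succ, Fin.cons_zero, Fin.cons_succ]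

theorem bernWeight_cons {n : ℕ} (p : Fin (n + 1) → ℝ) (b : Bool) (ω : Fin n → Bool) :
    bernWeight p (Fin.cons b ω : Fin (n + 1) → Bool) =
      (if b then p 0 else 1 - p 0) * bernWeight (fun i ↦ p i.succ) ω := by
  simp only [bernWeight, Fin.prod_univ_succ, Fin.cons_zero, Fin.cons_succ]

theorem bernPr_succ {n : ℕ} (p : Fin (n + 1) → ℝ) (E : (Fin (n + 1) → Bool) → Prop)
    [DecidablePred E] :
    bernPr p E = p 0 * bernPr (fun i ↦ p i.succ) (fun ω ↦ E (Fin.cons true ω)) +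
      (1 - p 0) * bernPr (fun i ↦ p i.succ) (fun ω ↦ E (Fin.cons false ω)) := by
  simp only [bernPr, Finset.sum_filter, Finset.mul_sum]
  rw [← (Fin.consEquiv fun _ ↦ Bool).sum_comp, Fintype.sum_prod_type, Fintype.sum_bool]
  simp [Fin.consEquiv, bernWeight_cons]

theorem bernPr_bCount_eq_zero {n : ℕ} (p : Fin n → ℝ) :
    bernPr p (fun ω ↦ bCount ω = 0) = ∏ i, (1 - p i) := by
  simp [bernPr, bCount_eq_zero_iff, Finset.sum_filter, bernWeight]

theorem bernPr_bCount_eq_succ {n : ℕ} (p : Fin (n + 1) → ℝ) (k : ℕ) :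
    bernPr p (fun ω ↦ bCount ω = k + 1) =
      p 0 * bernPr (fun i ↦ p i.succ) (fun ω ↦ bCount ω = k) +
        (1 - p 0) * bernPr (fun i ↦ p i.succ) (fun ω ↦ bCount ω = k + 1) := by
  rw [bernPr_succ]
  simp [bCount_cons, add_comm 1]

theorem bernPr_bCount_eq_zero_le_exp_neg {n : ℕ} {p : Fin n → ℝ} (hp : ∀ i, p i ≤ 1) :
    bernPr p (fun ω ↦ bCount ω = 0) ≤ Real.exp (-∑ i, p i) :=
  (bernPr_bCount_eq_zero p).trans_le (prod_one_sub_le_exp_neg_sum _ fun i _ ↦ hp i)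

theorem mul_bernPr_zero_add_bernPr_one_succ {n : ℕ} (p : Fin (n + 1) → ℝ) (a : ℝ) :
    a * bernPr p (fun ω ↦ bCount ω = 0) + bernPr p (fun ω ↦ bCount ω = 1) =
      (1 - p 0) * (a * bernPr (fun i ↦ p i.succ) (fun ω ↦ bCount ω = 0) +
          bernPr (fun i ↦ p i.succ) (fun ω ↦ bCount ω = 1)) +
        p 0 * bernPr (fun i ↦ p i.succ) (fun ω ↦ bCount ω = 0) := by
  rw [bernPr_bCount_eq_succ p 0]
  simp only [bernPr_bCount_eq_zero, Fin.prod_univ_succ]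
  ring

/-- If `X` is a sum of independent Bernoulli random variables
with means `μ_i ∈ [0,1]` and total mean `μ = ∑ μ_i`, then
`2·P(X = 0) + P(X = 1) ≤ (2 + μ)·e^{-μ}`, the corresponding Poisson(μ) value. -/
theorem bernoulli_sum_low_values_le_poisson (n : ℕ) (μ : Fin n → ℝ)
    (hμ : ∀ i, 0 ≤ μ i ∧ μ i ≤ 1) :
    2 * bernPr μ (fun ω => bCount ω = 0) + bernPr μ (fun ω => bCount ω = 1) ≤
      (2 + ∑ i, μ i) * Real.exp (-(∑ i, μ i)) := by
  induction n with
  | zero => simp [bernPr, bCount, bernWeight]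
  | succ n ih =>
    have mean_nonneg : 0 ≤ μ 0 := (hμ 0).1
    have one_sub_nonneg : 0 ≤ 1 - μ 0 := sub_nonneg.2 (hμ 0).2
    have tail_le := ih (fun i ↦ μ i.succ) fun i ↦ hμ i.succ
    have tail_zero_le := bernPr_bCount_eq_zero_le_exp_neg fun i : Fin n ↦ (hμ i.succ).2
    have two_le : 2 ≤ 2 + ∑ i : Fin n, μ i.succ :=
      le_add_of_nonneg_right (Finset.sum_nonneg fun i _ ↦ (hμ i.succ).1)
    rw [mul_bernPr_zero_add_bernPr_one_succ, Fin.sum_univ_succ]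
    set m := ∑ i : Fin n, μ i.succ
    calc
      _ ≤ (1 - μ 0) * ((2 + m) * Real.exp (-m)) + μ 0 * Real.exp (-m) := by gcongr
      _ = ((1 - μ 0) * (2 + m) + μ 0) * Real.exp (-m) := by ring
      _ ≤ (2 + m + μ 0) * Real.exp (-μ 0) * Real.exp (-m) := by
        gcongr
        exact one_sub_mul_add_self_le_add_mul_exp_neg two_le mean_nonneg
      _ = (2 + (μ 0 + m)) * Real.exp (-(μ 0 + m)) := by rw [neg_add, Real.exp_add]; ring
end

section
/- In the eager VCG auction, for every real τ > 0 and every reserve-price vector r, the number of winners whose payment is at least τ is at least min(|{b ∈ B : τ ≤ r_b and r_b ≤ β_b}|, k). -/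
/-!
The eager VCG auction with `k` identical items, buyers `ι`, bids `β` and
personalized reserve prices `r`.
-/

variable {ι : Type*} [Fintype ι] [DecidableEq ι]

/-- the set of buyers who clear their reserve price -/
noncomputable def clears (β r : ι → ℝ) : Finset ι :=
  Finset.univ.filter fun b => r b ≤ β b

/-- the winners: buyers who clear their reserve and have one of the `k` highest
cleared bids (fewer than `k` clearing buyers bid strictly higher) -/
noncomputable def winners (k : ℕ) (β r : ι → ℝ) : Finset ι :=
  (clears β r).filter fun b =>
    ((clears β r).filter fun b' => β b < β b').card < k

/-- the supporting bid: the `(k+1)`-th highest cleared bid, or `0` if fewer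
than `k+1` buyers clear their reserve -/
noncomputable def supportBid (k : ℕ) (β r : ι → ℝ) : ℝ :=
  if hT : ((clears β r).filter fun b =>
      k ≤ ((clears β r).filter fun b' => β b < β b').card).Nonempty then
    ((clears β r).filter fun b =>
      k ≤ ((clears β r).filter fun b' => β b < β b').card).sup' hT β
  else 0

/-- each winner pays the maximum of their reserve price and the supporting bid;
non-winners pay nothing -/
noncomputable def payment (k : ℕ) (β r : ι → ℝ) (b : ι) : ℝ :=
  if b ∈ winners k β r then max (r b) (supportBid k β r) else 0

section TopElements

variable {α γ : Type*} [LinearOrder γ]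

/-- If some element is not among the top `k`, take a largest such element: the elements above it
number at least `k`, and by its maximality they are all among the top `k`. -/
lemma min_card_le_card_filter_card_lt (s : Finset α) (f : α → γ) (k : ℕ) :
    min s.card k ≤ (s.filter fun a => (s.filter fun a' => f a < f a').card < k).card := by
  by_cases hall : ∀ a ∈ s, (s.filter fun a' => f a < f a').card < k
  · rw [Finset.filter_true_of_mem hall]
    exact min_le_left _ _
  · have hrest : (s.filter fun a => k ≤ (s.filter fun a' => f a < f a').card).Nonempty := by
      simpa only [Finset.filter_nonempty_iff, not_forall, not_lt, exists_prop] using hall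
    obtain ⟨m, hm, hmax⟩ := Finset.exists_max_image _ f hrest
    have habove : ∀ a ∈ s, f m < f a → (s.filter fun a' => f a < f a').card < k :=
      fun a ha hlt => lt_of_not_ge fun hge =>
        (hmax a (Finset.mem_filter.mpr ⟨ha, hge⟩)).not_gt hlt
    calc
      min s.card k ≤ k := min_le_right _ _
      _ ≤ (s.filter fun a => f m < f a).card := (Finset.mem_filter.mp hm).2
      _ ≤ _ := Finset.card_le_card (Finset.monotone_filter_right s habove)

end TopElements

section Auction

omit [DecidableEq ι] in
lemma min_card_clears_le_card_winners (k : ℕ) (β r : ι → ℝ) :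
    min (clears β r).card k ≤ (winners k β r).card :=
  min_card_le_card_filter_card_lt (clears β r) β k

variable {k : ℕ} {β r : ι → ℝ} {b : ι}

omit [DecidableEq ι] in
lemma le_supportBid_of_notMem_winners (hb : b ∈ clears β r) (hlose : b ∉ winners k β r) :
    β b ≤ supportBid k β r := by
  have hbelow : b ∈ (clears β r).filter fun b =>
      k ≤ ((clears β r).filter fun b' => β b < β b').card :=
    Finset.mem_filter.mpr
      ⟨hb, not_lt.mp fun hlt => hlose (Finset.mem_filter.mpr ⟨hb, hlt⟩)⟩
  rw [supportBid, dif_pos ⟨b, hbelow⟩]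
  exact Finset.le_sup' β hbelow

lemma le_payment_iff_of_mem_winners {τ : ℝ} (hb : b ∈ winners k β r) :
    τ ≤ payment k β r b ↔ τ ≤ r b ∨ τ ≤ supportBid k β r := by
  rw [payment, if_pos hb, le_max_iff]

/-- If a buyer with `τ ≤ r b ≤ β b` loses, then its bid pushes the supporting bid up to at least
`τ`, so that every winner pays at least `τ`. Beware that with tied bids `winners` can have more
than `k` elements. -/
theorem eager_vcg_winners_paying_tau_general (k : ℕ) (β r : ι → ℝ) (τ : ℝ) :
    min (Finset.univ.filter fun b => τ ≤ r b ∧ r b ≤ β b).card k ≤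
      ((winners k β r).filter fun b => τ ≤ payment k β r b).card := by
  by_cases hwin : (Finset.univ.filter fun b => τ ≤ r b ∧ r b ≤ β b) ⊆ winners k β r
  · refine (min_le_left _ _).trans (Finset.card_le_card fun b hb => ?_)
    have hτr : τ ≤ r b := (Finset.mem_filter.mp hb).2.1
    exact Finset.mem_filter.mpr
      ⟨hwin hb, (le_payment_iff_of_mem_winners (hwin hb)).mpr (.inl hτr)⟩
  · obtain ⟨b, hb, hlose⟩ := Finset.not_subset.mp hwin
    obtain ⟨-, hτr, hrβ⟩ := Finset.mem_filter.mp hb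
    have hsub : (Finset.univ.filter fun b => τ ≤ r b ∧ r b ≤ β b) ⊆ clears β r :=
      Finset.monotone_filter_right _ fun _ _ h => h.2
    have hsupport : τ ≤ supportBid k β r :=
      (hτr.trans hrβ).trans (le_supportBid_of_notMem_winners (hsub hb) hlose)
    have hpay : ∀ c ∈ winners k β r, τ ≤ payment k β r c :=
      fun c hc => (le_payment_iff_of_mem_winners hc).mpr (.inr hsupport)
    rw [Finset.filter_true_of_mem hpay]
    exact (min_le_min_right k (Finset.card_le_card hsub)).trans
      (min_card_clears_le_card_winners k β r)

end Auction

/-- In the eager VCG auction, for every `τ > 0` and every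
reserve-price vector `r`, the number of winners whose payment is at least `τ`
is at least `min(|{b : τ ≤ r_b ≤ β_b}|, k)`. -/
theorem eager_vcg_winners_paying_tau (k : ℕ) (hk : 1 ≤ k)
    (hcard : k + 1 ≤ Fintype.card ι) (β : ι → ℝ)
    (hβinj : Function.Injective β) (hβ0 : ∀ b, 0 ≤ β b)
    (r : ι → ℝ) (hr0 : ∀ b, 0 ≤ r b) (τ : ℝ) (hτ : 0 < τ) :
    min (Finset.univ.filter fun b => τ ≤ r b ∧ r b ≤ β b).card k ≤
      ((winners k β r).filter fun b => τ ≤ payment k β r b).card :=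
  eager_vcg_winners_paying_tau_general k β r τ
end

section
/- Consider the eager VCG auction with random reserve prices: let r = (r_b)_{b ∈ B} be a family of nonnegative real-valued random variables, and for τ > 0 let W(r, τ) denote the (random) number of winners whose payment is at least τ, let B_τ = {b ∈ B : β_b ≥ τ}, let Q_τ = |{b ∈ B_τ : r_b ≤ β_b}| and let P_τ = |{b ∈ B_τ : τ ≤ r_b ≤ β_b}|. Then E[W(r, τ)] ≥ max(k · P(Q_τ > k), E[min(P_τ, k)]). -/
/-!
The eager VCG auction with `k` identical items, buyers `ι`, bids `β` and
personalized reserve prices `r`.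
-/

variable {ι : Type*} [Fintype ι] [DecidableEq ι]

open MeasureTheory

/-!
If some clearing buyer bidding at least `τ` loses, then there are `k` winners and the supporting bid
is at least `τ`, so at least `k` winners pay at least `τ`. More than `k` clearing bids of at least
`τ` force such a loser, and Markov's inequality turns this into the bound `k · P(Q_τ > k)`. If there
is no such loser, every buyer counted by `P_τ` wins and pays at least their own reserve `≥ τ`; so
`min(P_τ, k)` is a pointwise lower bound.
-/

open scoped Finset

section TopK

variable {α R : Type*} [LinearOrder R] {s : Finset α} {f : α → R} {k : ℕ}

theorem exists_le_card_filter_lt_of_lt_card (hf : Set.InjOn f s) (hk : k < #s) :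
    ∃ a ∈ s, k ≤ #{b ∈ s | f a < f b} := by
  classical
  obtain ⟨a, ha, hmin⟩ := s.exists_min_image f (Finset.card_pos.1 (Nat.zero_lt_of_lt hk))
  have hsub : s.erase a ⊆ {b ∈ s | f a < f b} := fun b hb => by
    obtain ⟨hne, hb⟩ := Finset.mem_erase.1 hb
    exact Finset.mem_filter.2 ⟨hb, (hmin b hb).lt_of_ne fun h => hne (hf hb ha h.symm)⟩
  refine ⟨a, ha, le_trans ?_ (Finset.card_le_card hsub)⟩
  rw [Finset.card_erase_of_mem ha]
  exact Nat.le_sub_one_of_lt hk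

theorem le_card_filter_card_filter_lt_lt (h : ∃ a ∈ s, k ≤ #{b ∈ s | f a < f b}) :
    k ≤ #{a ∈ s | #{b ∈ s | f a < f b} < k} := by
  obtain ⟨a, ha, hmax⟩ := Finset.exists_max_image {a ∈ s | k ≤ #{b ∈ s | f a < f b}} f
    (Finset.filter_nonempty_iff.2 h)
  refine (Finset.mem_filter.1 ha).2.trans (Finset.card_le_card fun b hb => ?_)
  obtain ⟨hbs, hab⟩ := Finset.mem_filter.1 hb
  refine Finset.mem_filter.2 ⟨hbs, lt_of_not_ge fun hkb => ?_⟩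
  exact (hmax b (Finset.mem_filter.2 ⟨hbs, hkb⟩)).not_gt hab

end TopK

section Auction

variable {B : Type*} [Fintype B] {k : ℕ} {β r : B → ℝ} {τ : ℝ} {a b : B}

/-- The buyers who clear their reserve but are outbid by at least `k` other clearing buyers; the
supporting bid is the highest bid among them, or `0` if there are none. -/
noncomputable def losers (k : ℕ) (β r : B → ℝ) : Finset B :=
  {b ∈ clears β r | k ≤ #{b' ∈ clears β r | β b < β b'}}

/-- The winners whose payment is at least `τ`; their number is `W(r, τ)`. -/
noncomputable def payingWinners [DecidableEq B] (k : ℕ) (β r : B → ℝ) (τ : ℝ) : Finset B :=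
  {b ∈ winners k β r | τ ≤ payment k β r b}

theorem mem_clears : b ∈ clears β r ↔ r b ≤ β b := by
  simp only [clears, Finset.mem_filter, Finset.mem_univ, true_and]

theorem mem_winners_of_notMem_losers (hb : b ∈ clears β r) (hl : b ∉ losers k β r) :
    b ∈ winners k β r :=
  Finset.mem_filter.2 ⟨hb, lt_of_not_ge fun h => hl (Finset.mem_filter.2 ⟨hb, h⟩)⟩

theorem le_supportBid (ha : a ∈ losers k β r) : β a ≤ supportBid k β r := by
  rw [supportBid, dif_pos ⟨a, ha⟩]
  exact Finset.le_sup' β ha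

variable [DecidableEq B]

theorem mem_payingWinners :
    b ∈ payingWinners k β r τ ↔ b ∈ winners k β r ∧ (τ ≤ r b ∨ τ ≤ supportBid k β r) := by
  rw [payingWinners, Finset.mem_filter]
  refine and_congr_right fun hb => ?_
  rw [payment, if_pos hb, le_max_iff]

theorem le_card_payingWinners_of_mem_losers (ha : a ∈ losers k β r) (hτ : τ ≤ β a) :
    k ≤ #(payingWinners k β r τ) := by
  have hwinners : k ≤ #(winners k β r) :=
    le_card_filter_card_filter_lt_lt ⟨a, Finset.mem_filter.1 ha⟩
  exact hwinners.trans <| Finset.card_le_card fun b hb =>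
    mem_payingWinners.2 ⟨hb, Or.inr (hτ.trans (le_supportBid ha))⟩

theorem le_card_payingWinners_of_lt_card (hβ : Function.Injective β)
    (hk : k < #{b | τ ≤ β b ∧ r b ≤ β b}) : k ≤ #(payingWinners k β r τ) := by
  obtain ⟨a, ha, hka⟩ := exists_le_card_filter_lt_of_lt_card hβ.injOn hk
  obtain ⟨hτa, hra⟩ := (Finset.mem_filter.1 ha).2
  have hsub : ({b | τ ≤ β b ∧ r b ≤ β b} : Finset B) ⊆ clears β r := fun b hb =>
    mem_clears.2 (Finset.mem_filter.1 hb).2.2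
  have hloser : a ∈ losers k β r := Finset.mem_filter.2
    ⟨mem_clears.2 hra, hka.trans (Finset.card_le_card (Finset.filter_subset_filter _ hsub))⟩
  exact le_card_payingWinners_of_mem_losers hloser hτa

theorem min_card_le_card_payingWinners (k : ℕ) (β r : B → ℝ) (τ : ℝ) :
    min #{b | τ ≤ β b ∧ τ ≤ r b ∧ r b ≤ β b} k ≤ #(payingWinners k β r τ) := by
  by_cases hloser : ∃ a ∈ losers k β r, τ ≤ β a
  · obtain ⟨a, ha, hτa⟩ := hloser
    exact (min_le_right _ _).trans (le_card_payingWinners_of_mem_losers ha hτa)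
  · refine (min_le_left _ _).trans (Finset.card_le_card fun b hb => ?_)
    obtain ⟨hτβ, hτr, hrβ⟩ := (Finset.mem_filter.1 hb).2
    have hwin : b ∈ winners k β r :=
      mem_winners_of_notMem_losers (mem_clears.2 hrβ) fun hl => hloser ⟨b, hl, hτβ⟩
    exact mem_payingWinners.2 ⟨hwin, Or.inl hτr⟩

end Auction

section Measurability

theorem measurable_of_factorsThrough {Ω γ δ : Type*} [MeasurableSpace Ω] [MeasurableSpace γ]
    [MeasurableSpace δ] [Countable δ] [MeasurableSingletonClass δ] {f : Ω → γ} {X : Ω → δ}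
    (hX : Measurable X) (hf : f.FactorsThrough X) : Measurable f := by
  intro t _
  have hpre : f ⁻¹' t = X ⁻¹' (X '' (f ⁻¹' t)) := by
    refine (Set.subset_preimage_image X _).antisymm fun ω ⟨ω', hω', h⟩ => ?_
    rwa [Set.mem_preimage, ← hf h]
  rw [hpre]
  exact hX (Set.to_countable _).measurableSet

variable {B : Type*} [Fintype B]

theorem measurable_coe_clears (β : B → ℝ) : Measurable fun r => (clears β r : Set B) := by
  refine measurable_set_iff.2 fun b => ?_
  simp only [Finset.mem_coe, mem_clears]
  exact measurableSet_setOfPred.1 (measurableSet_le (measurable_pi_apply b) measurable_const)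

theorem measurable_of_factorsThrough_clears {γ : Type*} [MeasurableSpace γ] (β : B → ℝ)
    {f : (B → ℝ) → γ} (hf : f.FactorsThrough (clears β)) : Measurable f :=
  measurable_of_factorsThrough (measurable_coe_clears β) fun _ _ h => hf (Finset.coe_injective h)

theorem measurable_mem_winners (k : ℕ) (β : B → ℝ) (b : B) :
    Measurable fun r => b ∈ winners k β r :=
  measurable_of_factorsThrough_clears β fun _ _ h => by simp only [winners, h]

theorem measurable_supportBid (k : ℕ) (β : B → ℝ) : Measurable (supportBid k β) :=
  measurable_of_factorsThrough_clears β fun _ _ h => by simp only [supportBid, h]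

variable [DecidableEq B]

theorem measurable_coe_payingWinners (k : ℕ) (β : B → ℝ) (τ : ℝ) :
    Measurable fun r => (payingWinners k β r τ : Set B) := by
  refine measurable_set_iff.2 fun b => ?_
  simp only [Finset.mem_coe, mem_payingWinners]
  have hreserve : MeasurableSet {r : B → ℝ | τ ≤ r b} :=
    measurableSet_le measurable_const (measurable_pi_apply b)
  have hsupport : MeasurableSet {r | τ ≤ supportBid k β r} :=
    measurableSet_le measurable_const (measurable_supportBid k β)
  exact (measurable_mem_winners k β b).and (hreserve.mem.or hsupport.mem)

theorem measurable_card_payingWinners (k : ℕ) (β : B → ℝ) (τ : ℝ) :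
    Measurable fun r => #(payingWinners k β r τ) :=
  measurable_of_factorsThrough (measurable_coe_payingWinners k β τ) fun _ _ h =>
    congrArg Finset.card (Finset.coe_injective h)

theorem integrable_card_payingWinners {Ω : Type*} [MeasurableSpace Ω] {μ : Measure Ω}
    [IsFiniteMeasure μ] (k : ℕ) (β : B → ℝ) {r : B → Ω → ℝ} (hr : ∀ b, AEMeasurable (r b) μ)
    (τ : ℝ) : Integrable (fun ω => (#(payingWinners k β (fun b => r b ω) τ) : ℝ)) μ := by
  have hmeas : AEMeasurable (fun ω => (#(payingWinners k β (fun b => r b ω) τ) : ℝ)) μ :=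
    (measurable_from_top.comp (measurable_card_payingWinners k β τ)).comp_aemeasurable
      (aemeasurable_pi_lambda _ hr)
  refine .of_bound hmeas.aestronglyMeasurable (Fintype.card B) (.of_forall fun ω => ?_)
  rw [Real.norm_natCast]
  exact Nat.cast_le.2 (Finset.card_le_univ _)

end Measurability

theorem eager_vcg_random_reserves_expected_winners_general {B : Type*} [Fintype B]
    [DecidableEq B] (k : ℕ) (β : B → ℝ) (hβ : Function.Injective β) {Ω : Type*} [MeasurableSpace Ω]
    (μ : Measure Ω) [IsFiniteMeasure μ] (r : B → Ω → ℝ) (hr : ∀ b, AEMeasurable (r b) μ) (τ : ℝ) :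
    max (k * μ.real {ω | k < #{b | τ ≤ β b ∧ r b ω ≤ β b}})
        (∫ ω, ((min #{b | τ ≤ β b ∧ τ ≤ r b ω ∧ r b ω ≤ β b} k : ℕ) : ℝ) ∂μ) ≤
      ∫ ω, (#(payingWinners k β (fun b => r b ω) τ) : ℝ) ∂μ := by
  have hint := integrable_card_payingWinners k β hr τ
  refine max_le ?_ ?_
  · calc k * μ.real {ω | k < #{b | τ ≤ β b ∧ r b ω ≤ β b}}
        ≤ k * μ.real {ω | (k : ℝ) ≤ #(payingWinners k β (fun b => r b ω) τ)} := by
          refine mul_le_mul_of_nonneg_left (measureReal_mono fun ω hω => ?_) k.cast_nonneg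
          exact (Nat.cast_le (α := ℝ)).2 (le_card_payingWinners_of_lt_card hβ hω)
      _ ≤ ∫ ω, (#(payingWinners k β (fun b => r b ω) τ) : ℝ) ∂μ :=
          mul_meas_ge_le_integral_of_nonneg (.of_forall fun _ => Nat.cast_nonneg _) hint _
  · refine integral_mono_of_nonneg (.of_forall fun _ => Nat.cast_nonneg _) hint
      (.of_forall fun ω => ?_)
    exact Nat.cast_le.2 (min_card_le_card_payingWinners k β (fun b => r b ω) τ)

/-- Eager VCG with random reserve prices `r b : Ω → ℝ`
(nonnegative, measurable, arbitrarily correlated): for `τ > 0`, with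
`W(r, τ)` the number of winners paying at least `τ`,
`Q_τ = |{b : β b ≥ τ, r_b ≤ β_b}|` and `P_τ = |{b : β b ≥ τ, τ ≤ r_b ≤ β_b}|`,
we have `E[W(r, τ)] ≥ max(k · P(Q_τ > k), E[min(P_τ, k)])`. -/
theorem eager_vcg_random_reserves_expected_winners (k : ℕ) (hk : 1 ≤ k)
    (hcard : k + 1 ≤ Fintype.card ι) (β : ι → ℝ)
    (hβinj : Function.Injective β) (hβ0 : ∀ b, 0 ≤ β b)
    {Ω : Type*} [MeasurableSpace Ω] (μ : Measure Ω) [IsProbabilityMeasure μ]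
    (r : ι → Ω → ℝ) (hr0 : ∀ b ω, 0 ≤ r b ω) (hrmeas : ∀ b, Measurable (r b))
    (τ : ℝ) (hτ : 0 < τ) :
    max ((k : ℝ) *
          (μ {ω | k < (Finset.univ.filter fun b => τ ≤ β b ∧ r b ω ≤ β b).card}).toReal)
        (∫ ω, ((min (Finset.univ.filter fun b =>
            τ ≤ β b ∧ τ ≤ r b ω ∧ r b ω ≤ β b).card k : ℕ) : ℝ) ∂μ) ≤
      ∫ ω, (((winners k β fun b => r b ω).filter fun b =>
          τ ≤ payment k β (fun b => r b ω) b).card : ℝ) ∂μ :=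
  eager_vcg_random_reserves_expected_winners_general k β hβinj μ r
    (fun b => (hrmeas b).aemeasurable) τ
end
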